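/- For every ξ ∈ (0,1) there exists a unique x ∈ [0, L1max(ξ)] with x = L2(ξ, x); i.e., there is a unique largest square inside the parallelogram P with midpoint at the diagonal point D(ξ), and its side length is the unique fixed point of x ↦ L2(ξ, x). (Claim of Section IV-A: the maximum achievable symmetric rate corresponds to the largest square inside P centered at D(ξ).) -/

import Mathlib

/-!
Put `δ = h12 * h21 - h11 * h22 > 0`. Inverting the linear map, a point `(u, v)` lies in `P` exactly
when its coordinates `s = (h12 * v - h22 * u) / δ` and `t = (h21 * u - h11 * v) / δ` lie in `[0, 1]`,
and `D(ξ)` has both coordinates equal to `ξ`. Because all `hij` are positive, `s` and `t` are extremal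
over a rectangle at its upper left and lower right corners, so for `x, y ≥ 0` the rectangle with sides
`x, y` centered at `D(ξ)` lies in `P` iff
`h22 * x + h12 * y ≤ M` and `h21 * x + h11 * y ≤ M`, where `M = 2 * δ * min ξ (1 - ξ) > 0`
(`rect_subset_iff`). Hence `L1max = min (M / h22) (M / h21)` (`L1max_eq`), and on `[0, L1max]`
`L2(ξ, x) = min ((M - h22 * x) / h12) ((M - h21 * x) / h11)` (`L2fun_eq`), which is strictly
decreasing. Its only fixed point is `min (M / (h12 + h22)) (M / (h11 + h21))`.
-/

noncomputable section

/-- The parallelogram `P = { (h11·s + h12·t, h21·s + h22·t) : s,t ∈ [0,1] }`. -/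
def Pgram (h11 h12 h21 h22 : ℝ) : Set (ℝ × ℝ) :=
  { v | ∃ s ∈ Set.Icc (0:ℝ) 1, ∃ t ∈ Set.Icc (0:ℝ) 1,
      v = (h11 * s + h12 * t, h21 * s + h22 * t) }

/-- The point `D(ξ)` on the diagonal of the parallelogram. -/
def Dpt (h11 h12 h21 h22 ξ : ℝ) : ℝ × ℝ := (ξ * (h11 + h12), ξ * (h21 + h22))

/-- Closed axis-aligned rectangle with horizontal side `L1`, vertical side `L2`, midpoint `c`. -/
def Rect (L1 L2 : ℝ) (c : ℝ × ℝ) : Set (ℝ × ℝ) :=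
  { v | |v.1 - c.1| ≤ L1 / 2 ∧ |v.2 - c.2| ≤ L2 / 2 }

/-- `L1max(ξ)`: sup of horizontal segment lengths centered at `D(ξ)` fitting inside `P`. -/
def L1max (h11 h12 h21 h22 ξ : ℝ) : ℝ :=
  sSup { L1 | L1 ≥ 0 ∧ Rect L1 0 (Dpt h11 h12 h21 h22 ξ) ⊆ Pgram h11 h12 h21 h22 }

/-- `L2(ξ, x)`: sup of vertical side lengths of rectangles with horizontal side `x`
centered at `D(ξ)` fitting inside `P`. -/
def L2fun (h11 h12 h21 h22 ξ x : ℝ) : ℝ :=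
  sSup { L2 | L2 ≥ 0 ∧ Rect x L2 (Dpt h11 h12 h21 h22 ξ) ⊆ Pgram h11 h12 h21 h22 }

/-- Rectangle with horizontal side `x` extended vertically upwards from `c` by `L2`. -/
def RectUp (x L2 : ℝ) (c : ℝ × ℝ) : Set (ℝ × ℝ) :=
  { v | |v.1 - c.1| ≤ x / 2 ∧ c.2 ≤ v.2 ∧ v.2 ≤ c.2 + L2 }

/-- Rectangle with horizontal side `x` extended vertically downwards from `c` by `L2`. -/
def RectDown (x L2 : ℝ) (c : ℝ × ℝ) : Set (ℝ × ℝ) :=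
  { v | |v.1 - c.1| ≤ x / 2 ∧ c.2 - L2 ≤ v.2 ∧ v.2 ≤ c.2 }

/-- `L2up(ξ, x)`: sup of upward one-sided vertical extensions. -/
def L2up (h11 h12 h21 h22 ξ x : ℝ) : ℝ :=
  sSup { L2 | L2 ≥ 0 ∧ RectUp x L2 (Dpt h11 h12 h21 h22 ξ) ⊆ Pgram h11 h12 h21 h22 }

/-- `L2down(ξ, x)`: sup of downward one-sided vertical extensions. -/
def L2down (h11 h12 h21 h22 ξ x : ℝ) : ℝ :=
  sSup { L2 | L2 ≥ 0 ∧ RectDown x L2 (Dpt h11 h12 h21 h22 ξ) ⊆ Pgram h11 h12 h21 h22 }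

/-- The bound `M = 2 * δ * min ξ (1 - ξ)`, with `δ = h12 * h21 - h11 * h22`, in the two linear
inequalities that describe the rectangles centered at `D(ξ)` inside the parallelogram. -/
def slack (h11 h12 h21 h22 ξ : ℝ) : ℝ := 2 * (h12 * h21 - h11 * h22) * min ξ (1 - ξ)

lemma slack_pos {h11 h12 h21 h22 ξ : ℝ} (hdet : h11 * h22 - h12 * h21 < 0)
    (hξ : ξ ∈ Set.Ioo (0:ℝ) 1) : 0 < slack h11 h12 h21 h22 ξ := by
  have h1 : 0 < min ξ (1 - ξ) := lt_min hξ.1 (by linarith [hξ.2])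
  have h2 : 0 < h12 * h21 - h11 * h22 := by linarith
  unfold slack
  positivity

lemma le_slack_iff {h11 h12 h21 h22 ξ a : ℝ} (hdet : h11 * h22 - h12 * h21 < 0) :
    a ≤ slack h11 h12 h21 h22 ξ ↔
      a ≤ 2 * (h12 * h21 - h11 * h22) * ξ ∧ a ≤ 2 * (h12 * h21 - h11 * h22) * (1 - ξ) := by
  have h2 : 0 ≤ 2 * (h12 * h21 - h11 * h22) := by linarith
  rw [slack, mul_min_of_nonneg _ _ h2, le_min_iff]

/-- Membership in the parallelogram through the inverse linear map, with denominators cleared. -/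
lemma mem_Pgram_iff {h11 h12 h21 h22 : ℝ} (hdet : h11 * h22 - h12 * h21 < 0) (u v : ℝ) :
    (u, v) ∈ Pgram h11 h12 h21 h22 ↔
      (0 ≤ h12 * v - h22 * u ∧ h12 * v - h22 * u ≤ h12 * h21 - h11 * h22) ∧
      (0 ≤ h21 * u - h11 * v ∧ h21 * u - h11 * v ≤ h12 * h21 - h11 * h22) := by
  have hδ : 0 < h12 * h21 - h11 * h22 := by linarith
  constructor
  · rintro ⟨s, ⟨hs0, hs1⟩, t, ⟨ht0, ht1⟩, h⟩
    obtain ⟨rfl, rfl⟩ := Prod.mk.inj h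
    have e1 : h12 * (h21 * s + h22 * t) - h22 * (h11 * s + h12 * t)
        = (h12 * h21 - h11 * h22) * s := by ring
    have e2 : h21 * (h11 * s + h12 * t) - h11 * (h21 * s + h22 * t)
        = (h12 * h21 - h11 * h22) * t := by ring
    rw [e1, e2]
    exact ⟨⟨mul_nonneg hδ.le hs0, mul_le_of_le_one_right hδ.le hs1⟩,
      mul_nonneg hδ.le ht0, mul_le_of_le_one_right hδ.le ht1⟩
  · rintro ⟨⟨hs0, hs1⟩, ht0, ht1⟩
    refine ⟨(h12 * v - h22 * u) / (h12 * h21 - h11 * h22),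
      ⟨div_nonneg hs0 hδ.le, (div_le_one hδ).2 hs1⟩,
      (h21 * u - h11 * v) / (h12 * h21 - h11 * h22),
      ⟨div_nonneg ht0 hδ.le, (div_le_one hδ).2 ht1⟩, ?_⟩
    have hne := hδ.ne'
    rw [Prod.mk.injEq, mul_div_assoc', mul_div_assoc', mul_div_assoc', mul_div_assoc',
      ← add_div, ← add_div, eq_div_iff hne, eq_div_iff hne]
    constructor <;> ring

lemma rect_subset_iff {h11 h12 h21 h22 : ℝ}
    (hpos11 : 0 < h11) (hpos12 : 0 < h12) (hpos21 : 0 < h21) (hpos22 : 0 < h22)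
    (hdet : h11 * h22 - h12 * h21 < 0) {ξ x y : ℝ} (hx : 0 ≤ x) (hy : 0 ≤ y) :
    Rect x y (Dpt h11 h12 h21 h22 ξ) ⊆ Pgram h11 h12 h21 h22 ↔
      h22 * x + h12 * y ≤ slack h11 h12 h21 h22 ξ ∧
      h21 * x + h11 * y ≤ slack h11 h12 h21 h22 ξ := by
  rw [le_slack_iff hdet, le_slack_iff hdet]
  constructor
  · intro h
    -- The upper left corner maximizes `s` and minimizes `t`; the lower right one does the opposite.
    have h1 : (ξ * (h11 + h12) - x / 2, ξ * (h21 + h22) + y / 2) ∈ Pgram h11 h12 h21 h22 := by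
      apply h
      simp only [Rect, Dpt, Set.mem_ofPred_eq, abs_le]
      refine ⟨⟨?_, ?_⟩, ?_, ?_⟩ <;> linarith
    have h2 : (ξ * (h11 + h12) + x / 2, ξ * (h21 + h22) - y / 2) ∈ Pgram h11 h12 h21 h22 := by
      apply h
      simp only [Rect, Dpt, Set.mem_ofPred_eq, abs_le]
      refine ⟨⟨?_, ?_⟩, ?_, ?_⟩ <;> linarith
    rw [mem_Pgram_iff hdet] at h1 h2
    obtain ⟨⟨_, a1⟩, a2, _⟩ := h1
    obtain ⟨⟨b1, _⟩, _, b2⟩ := h2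
    refine ⟨⟨?_, ?_⟩, ?_, ?_⟩ <;> linarith
  · rintro ⟨⟨a1, a2⟩, a3, a4⟩ ⟨u, v⟩ huv
    simp only [Rect, Dpt, Set.mem_ofPred_eq, abs_le] at huv
    obtain ⟨⟨u1, u2⟩, v1, v2⟩ := huv
    rw [mem_Pgram_iff hdet]
    have p1 := mul_le_mul_of_nonneg_left u1 hpos22.le
    have p2 := mul_le_mul_of_nonneg_left u2 hpos22.le
    have p3 := mul_le_mul_of_nonneg_left v1 hpos12.le
    have p4 := mul_le_mul_of_nonneg_left v2 hpos12.le
    have q1 := mul_le_mul_of_nonneg_left u1 hpos21.le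
    have q2 := mul_le_mul_of_nonneg_left u2 hpos21.le
    have q3 := mul_le_mul_of_nonneg_left v1 hpos11.le
    have q4 := mul_le_mul_of_nonneg_left v2 hpos11.le
    refine ⟨⟨?_, ?_⟩, ?_, ?_⟩ <;> linarith

lemma L1max_eq {h11 h12 h21 h22 : ℝ}
    (hpos11 : 0 < h11) (hpos12 : 0 < h12) (hpos21 : 0 < h21) (hpos22 : 0 < h22)
    (hdet : h11 * h22 - h12 * h21 < 0) {ξ : ℝ} (hξ : ξ ∈ Set.Ioo (0:ℝ) 1) :
    L1max h11 h12 h21 h22 ξ =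
      min (slack h11 h12 h21 h22 ξ / h22) (slack h11 h12 h21 h22 ξ / h21) := by
  have hM := slack_pos hdet hξ
  have hset : { L1 | L1 ≥ 0 ∧ Rect L1 0 (Dpt h11 h12 h21 h22 ξ) ⊆ Pgram h11 h12 h21 h22 } =
      Set.Icc 0 (min (slack h11 h12 h21 h22 ξ / h22) (slack h11 h12 h21 h22 ξ / h21)) := by
    ext x
    refine and_congr_right fun hx => ?_
    rw [rect_subset_iff hpos11 hpos12 hpos21 hpos22 hdet hx le_rfl, le_min_iff,
      le_div_iff₀' hpos22, le_div_iff₀' hpos21]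
    simp
  rw [L1max, hset, csSup_Icc (by positivity)]

lemma L2fun_eq {h11 h12 h21 h22 : ℝ}
    (hpos11 : 0 < h11) (hpos12 : 0 < h12) (hpos21 : 0 < h21) (hpos22 : 0 < h22)
    (hdet : h11 * h22 - h12 * h21 < 0) {ξ x : ℝ} (hx : 0 ≤ x)
    (h1 : h22 * x ≤ slack h11 h12 h21 h22 ξ) (h2 : h21 * x ≤ slack h11 h12 h21 h22 ξ) :
    L2fun h11 h12 h21 h22 ξ x =
      min ((slack h11 h12 h21 h22 ξ - h22 * x) / h12)
        ((slack h11 h12 h21 h22 ξ - h21 * x) / h11) := by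
  have hset : { L2 | L2 ≥ 0 ∧ Rect x L2 (Dpt h11 h12 h21 h22 ξ) ⊆ Pgram h11 h12 h21 h22 } =
      Set.Icc 0 (min ((slack h11 h12 h21 h22 ξ - h22 * x) / h12)
        ((slack h11 h12 h21 h22 ξ - h21 * x) / h11)) := by
    ext y
    refine and_congr_right fun hy => ?_
    rw [rect_subset_iff hpos11 hpos12 hpos21 hpos22 hdet hx hy, le_min_iff,
      le_div_iff₀' hpos12, le_div_iff₀' hpos11, le_sub_iff_add_le', le_sub_iff_add_le']
  rw [L2fun, hset, csSup_Icc]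
  exact le_min (div_nonneg (by linarith) hpos12.le) (div_nonneg (by linarith) hpos11.le)

/-- An equation `x = min _ _` of the shape solved by the fixed points of `L2`, with the unknown
brought to one side. -/
lemma eq_min_iff_eq_min {M a b c d x : ℝ} (ha : 0 < a) (hb : 0 < b) (hc : 0 < c) (hd : 0 < d) :
    x = min ((M - a * x) / b) ((M - c * x) / d) ↔ x = min (M / (b + a)) (M / (d + c)) := by
  have hba : 0 < b + a := by positivity
  have hdc : 0 < d + c := by positivity
  have l1 : x ≤ (M - a * x) / b ↔ x ≤ M / (b + a) := by
    rw [le_div_iff₀ hb, le_div_iff₀ hba]; constructor <;> intro h <;> linarith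
  have l2 : x ≤ (M - c * x) / d ↔ x ≤ M / (d + c) := by
    rw [le_div_iff₀ hd, le_div_iff₀ hdc]; constructor <;> intro h <;> linarith
  have g1 : (M - a * x) / b ≤ x ↔ M / (b + a) ≤ x := by
    rw [div_le_iff₀ hb, div_le_iff₀ hba]; constructor <;> intro h <;> linarith
  have g2 : (M - c * x) / d ≤ x ↔ M / (d + c) ≤ x := by
    rw [div_le_iff₀ hd, div_le_iff₀ hdc]; constructor <;> intro h <;> linarith
  rw [le_antisymm_iff, le_antisymm_iff, le_min_iff, le_min_iff, min_le_iff, min_le_iff,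
    l1, l2, g1, g2]

theorem stmt19 (h11 h12 h21 h22 : ℝ)
    (hpos11 : 0 < h11) (hpos12 : 0 < h12) (hpos21 : 0 < h21) (hpos22 : 0 < h22)
    (hdet : h11 * h22 - h12 * h21 < 0) :
    ∀ ξ ∈ Set.Ioo (0:ℝ) 1,
      ∃! x : ℝ, x ∈ Set.Icc (0:ℝ) (L1max h11 h12 h21 h22 ξ) ∧
        x = L2fun h11 h12 h21 h22 ξ x := by
  intro ξ hξ
  have hM := slack_pos hdet hξ
  rw [L1max_eq hpos11 hpos12 hpos21 hpos22 hdet hξ]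
  have key : ∀ x ∈ Set.Icc (0:ℝ)
      (min (slack h11 h12 h21 h22 ξ / h22) (slack h11 h12 h21 h22 ξ / h21)),
      (x = L2fun h11 h12 h21 h22 ξ x ↔ x = min (slack h11 h12 h21 h22 ξ / (h12 + h22))
        (slack h11 h12 h21 h22 ξ / (h11 + h21))) := by
    rintro x ⟨hx0, hx1⟩
    rw [le_min_iff, le_div_iff₀' hpos22, le_div_iff₀' hpos21] at hx1
    rw [L2fun_eq hpos11 hpos12 hpos21 hpos22 hdet hx0 hx1.1 hx1.2,
      eq_min_iff_eq_min hpos22 hpos12 hpos21 hpos11]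
  have hmem : min (slack h11 h12 h21 h22 ξ / (h12 + h22)) (slack h11 h12 h21 h22 ξ / (h11 + h21)) ∈
      Set.Icc (0:ℝ) (min (slack h11 h12 h21 h22 ξ / h22) (slack h11 h12 h21 h22 ξ / h21)) :=
    ⟨by positivity, min_le_min (div_le_div_of_nonneg_left hM.le hpos22 (by linarith))
      (div_le_div_of_nonneg_left hM.le hpos21 (by linarith))⟩
  exact ⟨_, ⟨hmem, (key _ hmem).2 rfl⟩, fun y hy => (key y hy.1).1 hy.2⟩
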